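/- arXiv:1912.03946 — 2 statements merged into one kernel-verified Lean document; each statement's English description precedes it below -/
import Mathlib

section
/- Let f, g : ℝ → ℝ with g concave and g ≥ f, and suppose x₀ ∈ ℝ satisfies g(x₀) = f^conc(x₀) where f^conc is the concave envelope of f, and f^conc(x₀) > f(x₀). Then there exist x¹ < x₀ < x² and θ ∈ (0,1) with x₀ = θ x¹ + (1−θ) x² and f^conc(x₀) = θ f^conc(x¹) + (1−θ) f^conc(x²). More generally, for any x₀ where f^conc(x₀) > f(x₀), f^conc is affine on a neighborhood of x₀ contained in {f^conc > f} (assuming f is continuous and f^conc is finite). -/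
/-!
Let `F` be the concave envelope of `f` and `f x₀ < c < F x₀`. On a short interval `[p, q]` around
`x₀` the function `f` stays below `c` and `F` above it, so the secant line `L` of `F` through `p`
and `q` lies above `c`, hence above `f`, on `[p, q]`. Outside `[p, q]` concavity gives
`f ≤ F ≤ L`. Thus `L` is itself a concave majorant of `f`, and minimality forces `F ≤ L`
everywhere; on `[p, q]` concavity gives the reverse inequality.
-/

open Set Filter Topology

section SecantLine

variable {𝕜 : Type*} [Field 𝕜]

/-- The secant line of `F` through the points of its graph over `p` and `q`, as an affine function
of the abscissa. For `p = q` it is the constant `F p`, because then `slope F p q = 0`. -/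
def secantLine (F : 𝕜 → 𝕜) (p q x : 𝕜) : 𝕜 :=
  F p + (x - p) * slope F p q

theorem secantLine_convexComb (F : 𝕜 → 𝕜) (p q θ : 𝕜) :
    secantLine F p q (θ * p + (1 - θ) * q) = θ * F p + (1 - θ) * F q := by
  have hslope : (q - p) * slope F p q = F q - F p := sub_smul_slope F p q
  unfold secantLine
  linear_combination (1 - θ) * hslope

@[simp]
theorem secantLine_apply_left (F : 𝕜 → 𝕜) (p q : 𝕜) : secantLine F p q p = F p := by
  simpa using secantLine_convexComb F p q 1

@[simp]
theorem secantLine_apply_right (F : 𝕜 → 𝕜) (p q : 𝕜) : secantLine F p q q = F q := by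
  simpa using secantLine_convexComb F p q 0

theorem sub_secantLine (F : 𝕜 → 𝕜) (p q x : 𝕜) :
    F x - secantLine F p q x = (x - p) * (slope F p x - slope F p q) := by
  have hslope : (x - p) * slope F p x = F x - F p := sub_smul_slope F p x
  unfold secantLine
  linear_combination -hslope

variable [LinearOrder 𝕜] [IsStrictOrderedRing 𝕜] {s : Set 𝕜} {F : 𝕜 → 𝕜} {p q x : 𝕜}

theorem concaveOn_secantLine (hs : Convex 𝕜 s) (F : 𝕜 → 𝕜) (p q : 𝕜) :
    ConcaveOn 𝕜 s (secantLine F p q) := by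
  refine ⟨hs, fun x _ y _ a b _ _ hab => le_of_eq ?_⟩
  simp only [secantLine, smul_eq_mul]
  linear_combination (F p - p * slope F p q) * hab

theorem min_le_secantLine (F : 𝕜 → 𝕜) (hx : x ∈ Icc p q) :
    min (F p) (F q) ≤ secantLine F p q x := by
  simpa using (concaveOn_secantLine convex_univ F p q).min_le_of_mem_Icc
    (mem_univ p) (mem_univ q) hx

theorem secantLine_le_of_mem_Icc (hF : ConcaveOn 𝕜 s F) (hp : p ∈ s) (hq : q ∈ s)
    (hx : x ∈ Icc p q) : secantLine F p q x ≤ F x := by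
  rcases hx.1.eq_or_lt with rfl | hpx
  · exact (secantLine_apply_left F p q).le
  have hxs : x ∈ s := hF.1.ordConnected.out hp hq hx
  have hslope : slope F p q ≤ slope F p x :=
    hF.slope_anti hp ⟨hxs, hpx.ne'⟩ ⟨hq, (hpx.trans_le hx.2).ne'⟩ hx.2
  rw [← sub_nonneg, sub_secantLine]
  exact mul_nonneg (sub_nonneg.2 hpx.le) (sub_nonneg.2 hslope)

theorem le_secantLine_of_notMem_Icc (hF : ConcaveOn 𝕜 s F) (hp : p ∈ s) (hq : q ∈ s)
    (hpq : p < q) (hxs : x ∈ s) (hx : x ∉ Icc p q) : F x ≤ secantLine F p q x := by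
  have hanti := hF.slope_anti hp
  have hqp : q ∈ s \ {p} := ⟨hq, hpq.ne'⟩
  rw [← sub_nonpos, sub_secantLine]
  rcases lt_or_ge x p with hxp | hpx
  · exact mul_nonpos_of_nonpos_of_nonneg (sub_nonpos.2 hxp.le)
      (sub_nonneg.2 (hanti ⟨hxs, hxp.ne⟩ hqp (hxp.trans hpq).le))
  · have hqx : q < x := lt_of_not_ge fun hxq => hx ⟨hpx, hxq⟩
    exact mul_nonpos_of_nonneg_of_nonpos (sub_nonneg.2 hpx)
      (sub_nonpos.2 (hanti hqp ⟨hxs, (hpq.trans hqx).ne'⟩ hqx.le))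

end SecantLine

/-- `F` is the concave envelope of `f` on `s`: the least concave majorant of `f` there. It is a
predicate, not an infimum over majorants, so that finiteness of the envelope is part of it; the
values of `f` and `F` outside `s` are irrelevant. -/
structure IsConcaveEnvelopeOn {𝕜 E : Type*} [Semiring 𝕜] [PartialOrder 𝕜] [AddCommMonoid E]
    [SMul 𝕜 E] (s : Set E) (f F : E → 𝕜) : Prop where
  concaveOn : ConcaveOn 𝕜 s F
  le : ∀ x ∈ s, f x ≤ F x
  minimal : ∀ h : E → 𝕜, ConcaveOn 𝕜 s h → (∀ x ∈ s, f x ≤ h x) → ∀ x ∈ s, F x ≤ h x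

namespace IsConcaveEnvelopeOn

theorem eqOn_secantLine {𝕜 : Type*} [Field 𝕜] [LinearOrder 𝕜] [IsStrictOrderedRing 𝕜]
    {s : Set 𝕜} {f F : 𝕜 → 𝕜} {p q : 𝕜} (hF : IsConcaveEnvelopeOn s f F) (hp : p ∈ s)
    (hq : q ∈ s) (hpq : p < q) (hf : ∀ x ∈ Icc p q, f x ≤ secantLine F p q x) :
    EqOn F (secantLine F p q) (Icc p q) := by
  have hmajorant : ∀ x ∈ s, f x ≤ secantLine F p q x := fun x hxs => by
    by_cases hx : x ∈ Icc p q
    · exact hf x hx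
    · exact (hF.le x hxs).trans (le_secantLine_of_notMem_Icc hF.concaveOn hp hq hpq hxs hx)
  intro x hx
  have hxs : x ∈ s := hF.concaveOn.1.ordConnected.out hp hq hx
  exact le_antisymm
    (hF.minimal _ (concaveOn_secantLine hF.concaveOn.1 F p q) hmajorant x hxs)
    (secantLine_le_of_mem_Icc hF.concaveOn hp hq hx)

variable {s : Set ℝ} {f F : ℝ → ℝ} {x₀ : ℝ}

theorem exists_eqOn_secantLine (hF : IsConcaveEnvelopeOn s f F) (hx₀ : x₀ ∈ interior s)
    (hf : UpperSemicontinuousAt f x₀) (hlt : f x₀ < F x₀) :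
    ∃ p q, x₀ ∈ Ioo p q ∧ Icc p q ⊆ s ∧ (∀ x ∈ Icc p q, f x < F x) ∧
      EqOn F (secantLine F p q) (Icc p q) := by
  obtain ⟨c, hfc, hcF⟩ := exists_between hlt
  have hFcont : ContinuousAt F x₀ :=
    hF.concaveOn.continuousOn_interior.continuousAt (isOpen_interior.mem_nhds hx₀)
  have hsep : ∀ᶠ x in 𝓝 x₀, x ∈ s ∧ f x < c ∧ c < F x :=
    (eventually_mem_set.2 (mem_interior_iff_mem_nhds.1 hx₀)).and
      ((hf c hfc).and (hFcont.eventually_const_lt hcF))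
  obtain ⟨δ, hδ, hball⟩ := Metric.nhds_basis_closedBall.eventually_iff.1 hsep
  rw [Real.closedBall_eq_Icc] at hball
  have hlo : x₀ - δ < x₀ := sub_lt_self x₀ hδ
  have hhi : x₀ < x₀ + δ := lt_add_of_pos_right x₀ hδ
  obtain ⟨hps, -, hcp⟩ := hball (left_mem_Icc.2 (hlo.trans hhi).le)
  obtain ⟨hqs, -, hcq⟩ := hball (right_mem_Icc.2 (hlo.trans hhi).le)
  refine ⟨x₀ - δ, x₀ + δ, ⟨hlo, hhi⟩, fun x hx => (hball hx).1,
    fun x hx => (hball hx).2.1.trans (hball hx).2.2,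
    hF.eqOn_secantLine hps hqs (hlo.trans hhi) fun x hx => ?_⟩
  calc f x ≤ c := (hball hx).2.1.le
    _ ≤ min (F (x₀ - δ)) (F (x₀ + δ)) := le_min hcp.le hcq.le
    _ ≤ secantLine F (x₀ - δ) (x₀ + δ) x := min_le_secantLine F hx

end IsConcaveEnvelopeOn

theorem stmt17_general {s : Set ℝ} {f F : ℝ → ℝ} {x₀ : ℝ} (hF : IsConcaveEnvelopeOn s f F)
    (hx₀ : x₀ ∈ interior s) (hf : UpperSemicontinuousAt f x₀) (hlt : f x₀ < F x₀) :
    (∃ x₁ ∈ s, ∃ x₂ ∈ s, ∃ θ : ℝ, x₁ < x₀ ∧ x₀ < x₂ ∧ θ ∈ Ioo (0 : ℝ) 1 ∧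
      x₀ = θ * x₁ + (1 - θ) * x₂ ∧ F x₀ = θ * F x₁ + (1 - θ) * F x₂) ∧
    (∃ U ∈ 𝓝 x₀, U ⊆ s ∧ (∀ x ∈ U, f x < F x) ∧ ∃ a b : ℝ, ∀ x ∈ U, F x = a * x + b) := by
  obtain ⟨p, q, ⟨hp, hq⟩, hpqs, hfF, hsecant⟩ := hF.exists_eqOn_secantLine hx₀ hf hlt
  have hpq : p ≤ q := (hp.trans hq).le
  constructor
  · obtain ⟨θ, η, hθ, hη, hsum, hcomb⟩ := (Convex.mem_Ioo (hp.trans hq)).1 ⟨hp, hq⟩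
    obtain rfl : η = 1 - θ := eq_sub_of_add_eq' hsum
    refine ⟨p, hpqs (left_mem_Icc.2 hpq), q, hpqs (right_mem_Icc.2 hpq), θ, hp, hq,
      ⟨hθ, sub_pos.1 hη⟩, hcomb.symm, ?_⟩
    rw [hsecant ⟨hp.le, hq.le⟩, ← hcomb, secantLine_convexComb]
  · refine ⟨Icc p q, Icc_mem_nhds hp hq, hpqs, hfF, slope F p q, F p - slope F p q * p,
      fun x hx => ?_⟩
    rw [hsecant hx, secantLine]
    ring

/-- Structure of the concave envelope at points of strict domination: the
envelope value is a strict convex combination of envelope values on both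
sides, and the envelope is locally affine on `{f^conc > f}`. -/
theorem stmt17 (f g fconc : ℝ → ℝ)
    (hf : Continuous f)
    (hconc : ConcaveOn ℝ Set.univ fconc)
    (hge : ∀ x, f x ≤ fconc x)
    (hmin : ∀ h : ℝ → ℝ, ConcaveOn ℝ Set.univ h →
      (∀ x, f x ≤ h x) → ∀ x, fconc x ≤ h x)
    (hg : ConcaveOn ℝ Set.univ g) (hgf : ∀ x, f x ≤ g x) :
    (∀ x₀ : ℝ, g x₀ = fconc x₀ → f x₀ < fconc x₀ →
      ∃ x₁ x₂ θ : ℝ, x₁ < x₀ ∧ x₀ < x₂ ∧ θ ∈ Set.Ioo (0 : ℝ) 1 ∧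
        x₀ = θ * x₁ + (1 - θ) * x₂ ∧
        fconc x₀ = θ * fconc x₁ + (1 - θ) * fconc x₂) ∧
    (∀ x₀ : ℝ, f x₀ < fconc x₀ →
      ∃ U ∈ nhds x₀, (∀ x ∈ U, f x < fconc x) ∧
        ∃ a b : ℝ, ∀ x ∈ U, fconc x = a * x + b) := by
  have henv : IsConcaveEnvelopeOn univ f fconc := ⟨hconc, by simpa using hge, by simpa using hmin⟩
  have hlocal := fun x₀ => stmt17_general henv (x₀ := x₀) (by simp) (hf.upperSemicontinuous x₀)
  simp only [mem_univ, true_and, subset_univ] at hlocal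
  exact ⟨fun x₀ _ hlt => (hlocal x₀ hlt).1, fun x₀ hlt => (hlocal x₀ hlt).2⟩
end

section
/- Let (Ω, F, (F_t), P) be a filtered probability space and X a continuous (F_t)-martingale. Suppose v : [0,T] × ℝ → ℝ is continuous, x ↦ v(t,x) is concave for every t, t ↦ v(t,x) is non-increasing for every x, and ∂_x v exists, is continuous and bounded on [0,T] × ℝ. Then there exists a non-increasing predictable process K with K_0 = 0 such that v(t, X_t) = v(0, X_0) + ∫₀ᵗ ∂_x v(s, X_s) dX_s + K_t for all t ∈ [0,T], P-a.s. In particular, v(·, X) − ∫₀^· ∂_x v(s,X_s) dX_s is a supermartingale. -/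
open MeasureTheory Filter

/-!
As `v(t, ·)` lies below its tangents and `v(·, x)` decreases, one has
`v(t, y) ≤ v(s, x) + ∂ₓv(s, x)(y - x)` for `s ≤ t`. Summing this over uniform partitions of `[0, t]`
that contain `c = t a / b` and passing to the limit gives `v(t, X_t) - v(c, X_c) ≤ I_t - I_c` almost
surely. To replace `c` by an arbitrary `s ≤ t` one needs `I` to be continuous in measure. The
difference of two nested Riemann sums is a martingale transform whose integrand consists of
increments of `∂ₓv(·, X)` over short times, which are small off a set of small probability. By
Burkholder's weak-type inequality the Riemann sums therefore converge in measure uniformly in time,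
and such a limit inherits continuity in measure. Hence `v(t, X_t) - v(0, X_0) - I_t` is almost
surely decreasing between any two given times, which is the supermartingale property, and `K` is a
modification of it with decreasing paths.
-/

/-! ### Convergence in measure uniformly in a parameter -/

lemma measureReal_le_norm_add_le {Ω E : Type*} {m : MeasurableSpace Ω} (μ : Measure Ω)
    [IsFiniteMeasure μ] [SeminormedAddCommGroup E] (f g : Ω → E) (δ : ℝ) :
    μ.real {ω | δ ≤ ‖f ω + g ω‖} ≤ μ.real {ω | δ / 2 ≤ ‖f ω‖} + μ.real {ω | δ / 2 ≤ ‖g ω‖} := by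
  refine (measureReal_mono fun ω (hω : δ ≤ ‖f ω + g ω‖) => ?_).trans (measureReal_union_le _ _)
  by_contra! hnot
  simp only [Set.mem_union, Set.mem_ofPred_eq, not_or, not_le] at hnot
  linarith [norm_add_le (f ω) (g ω)]

lemma tendstoInMeasure_comp_of_uniform_limit {Ω E ι κ γ : Type*} {m : MeasurableSpace Ω}
    {μ : Measure Ω} [IsFiniteMeasure μ] [SeminormedAddCommGroup E] {l : Filter ι} [l.NeBot]
    {l' : Filter γ} {S : Set κ} {F : ι → κ → Ω → E} {G : κ → Ω → E}
    (hFG : TendstoInMeasure μ (fun (p : ι × κ) ω => F p.1 p.2 ω - G p.2 ω) (l ×ˢ 𝓟 S) 0)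
    {c : γ → κ} {s : κ} (hc : ∀ k, c k ∈ S) (hs : s ∈ S)
    (hF : ∀ i, TendstoInMeasure μ (fun k => F i (c k)) l' (F i s)) :
    TendstoInMeasure μ (fun k => G (c k)) l' (G s) := by
  rw [tendstoInMeasure_iff_measureReal_norm] at hFG ⊢
  intro δ hδ
  refine tendsto_order.mpr ⟨fun a ha => .of_forall fun _ => ha.trans_le measureReal_nonneg,
    fun η hη => ?_⟩
  have hunif := (hFG (δ / 2 / 2) (by positivity)).eventually_lt_const (show 0 < η / 3 by positivity)
  simp only [Pi.zero_apply, sub_zero, eventually_prod_principal_iff] at hunif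
  obtain ⟨i, hi⟩ := hunif.exists
  filter_upwards [((tendstoInMeasure_iff_measureReal_norm.mp (hF i)) (δ / 2)
    (by positivity)).eventually_lt_const (show 0 < η / 3 by positivity)] with k hk
  have hsplit : ∀ ω, G (c k) ω - G s ω =
      ((F i s ω - G s ω) + -(F i (c k) ω - G (c k) ω)) + (F i (c k) ω - F i s ω) :=
    fun ω => by abel
  have houter := measureReal_le_norm_add_le μ
    (fun ω => (F i s ω - G s ω) + -(F i (c k) ω - G (c k) ω)) (fun ω => F i (c k) ω - F i s ω) δ
  have hinner := measureReal_le_norm_add_le μ (fun ω => F i s ω - G s ω)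
    (fun ω => -(F i (c k) ω - G (c k) ω)) (δ / 2)
  simp only [norm_neg] at hinner
  simp only [hsplit]
  linarith [hi s hs, hi (c k) (hc k)]

/-! ### Burkholder's weak-type inequality -/

/-- Burkholder's special function for the weak-type `(1, 1)` inequality: it is nonpositive
on the axis `y = 0`, concave along every line of slope at most `1` in absolute value, and
dominates `1 - 2 * |x|` where `1 ≤ |y|`. -/
noncomputable def burkholderFun (x y : ℝ) : ℝ :=
  if |x| + |y| ≤ 1 then y ^ 2 - x ^ 2 else 1 - 2 * |x|

/-- The `x`-component of a supergradient of `burkholderFun` in the directions of slope at most `1`;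
on the ray `x = 0`, `1 < |y|`, where several values are possible, it is `-2`. -/
noncomputable def burkholderGradFst (x y : ℝ) : ℝ :=
  if |x| + |y| ≤ 1 then -2 * x else if 0 ≤ x then -2 else 2

/-- The `y`-component of the supergradient whose `x`-component is `burkholderGradFst`. -/
noncomputable def burkholderGradSnd (x y : ℝ) : ℝ :=
  if |x| + |y| ≤ 1 then 2 * y else 0

lemma abs_burkholderGradFst_le (x y : ℝ) : |burkholderGradFst x y| ≤ 2 := by
  unfold burkholderGradFst
  split_ifs with hxy hx
  · rw [abs_mul, abs_neg, abs_two]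
    linarith [abs_nonneg y]
  · norm_num
  · norm_num

lemma abs_burkholderGradSnd_le (x y : ℝ) : |burkholderGradSnd x y| ≤ 2 := by
  unfold burkholderGradSnd
  split_ifs with hxy
  · rw [abs_mul, abs_two]
    linarith [abs_nonneg x]
  · norm_num

lemma measurableSet_abs_add_abs_le_one : MeasurableSet {p : ℝ × ℝ | |p.1| + |p.2| ≤ 1} :=
  measurableSet_le (by fun_prop) measurable_const

lemma measurable_burkholderGradFst : Measurable fun p : ℝ × ℝ => burkholderGradFst p.1 p.2 :=
  Measurable.ite measurableSet_abs_add_abs_le_one (by fun_prop)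
    (Measurable.ite (measurableSet_le measurable_const measurable_fst)
      measurable_const measurable_const)

lemma measurable_burkholderGradSnd : Measurable fun p : ℝ × ℝ => burkholderGradSnd p.1 p.2 :=
  Measurable.ite measurableSet_abs_add_abs_le_one (by fun_prop) measurable_const

lemma burkholderFun_zero_right_nonpos (x : ℝ) : burkholderFun x 0 ≤ 0 := by
  unfold burkholderFun
  split_ifs with hx
  · linarith [sq_nonneg x]
  · rw [abs_zero, add_zero, not_le] at hx
    linarith

lemma neg_two_mul_abs_le_burkholderFun (x y : ℝ) : -2 * |x| ≤ burkholderFun x y := by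
  unfold burkholderFun
  split_ifs with hxy
  · nlinarith [sq_nonneg y, abs_nonneg x, abs_nonneg y, sq_abs x]
  · linarith

lemma one_sub_two_mul_abs_le_burkholderFun (x : ℝ) {y : ℝ} (hy : 1 ≤ |y|) :
    1 - 2 * |x| ≤ burkholderFun x y := by
  unfold burkholderFun
  split_ifs with hxy
  · nlinarith [abs_nonneg x, sq_abs x, sq_abs y]
  · exact le_rfl

lemma burkholderFun_add_le_of_mem {x y h k : ℝ} (hxy : |x| + |y| ≤ 1) (hk : |k| ≤ |h|) :
    burkholderFun (x + h) (y + k) ≤ y ^ 2 - x ^ 2 - 2 * x * h + 2 * y * k := by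
  have hkh : k ^ 2 ≤ h ^ 2 := sq_le_sq.mpr hk
  unfold burkholderFun
  split_ifs with hin
  · linarith
  · push Not at hin
    by_cases hx1 : |x + h| ≤ 1
    · have : (1 - |x + h|) ^ 2 ≤ (y + k) ^ 2 := by
        rw [← sq_abs (y + k)]
        exact pow_le_pow_left₀ (by linarith) (by linarith) 2
      nlinarith [sq_abs (x + h)]
    · push Not at hx1
      have hxh : (|x + h| - 1) ^ 2 ≤ (|h| - |y|) ^ 2 :=
        pow_le_pow_left₀ (by linarith) (by linarith [abs_add_le x h]) 2
      have hyk : -(|y| * |h|) ≤ y * k :=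
        (neg_le_neg (mul_le_mul_of_nonneg_left hk (abs_nonneg y))).trans
          (abs_mul y k ▸ neg_abs_le (y * k))
      nlinarith [sq_abs (x + h), sq_abs h, sq_abs y]

lemma burkholderFun_le_one_sub (x y : ℝ) : burkholderFun x y ≤ 1 - 2 * |x| := by
  unfold burkholderFun
  split_ifs with hxy
  · have : |y| ^ 2 ≤ (1 - |x|) ^ 2 := pow_le_pow_left₀ (abs_nonneg y) (by linarith) 2
    nlinarith [sq_abs x, sq_abs y]
  · exact le_rfl

lemma burkholderFun_add_le (x y : ℝ) {h k : ℝ} (hk : |k| ≤ |h|) :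
    burkholderFun (x + h) (y + k) ≤
      burkholderFun x y + burkholderGradFst x y * h + burkholderGradSnd x y * k := by
  by_cases hxy : |x| + |y| ≤ 1
  · simp only [burkholderFun.eq_def x y, burkholderGradFst, burkholderGradSnd, if_pos hxy]
    linarith [burkholderFun_add_le_of_mem hxy hk]
  · simp only [burkholderFun.eq_def x y, burkholderGradFst, burkholderGradSnd, if_neg hxy]
    refine (burkholderFun_le_one_sub _ _).trans ?_
    split_ifs with hx
    · linarith [abs_of_nonneg hx, le_abs_self (x + h)]
    · linarith [abs_of_neg (not_le.mp hx), neg_abs_le (x + h)]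

section MartingaleIncrement

variable {Ω ι : Type*} {m : MeasurableSpace Ω} {μ : Measure Ω} [Preorder ι] {ℱ : Filtration ι m}
  {X : ι → Ω → ℝ}

lemma integrable_mul_sub_of_martingale (hX : Martingale X ℱ μ) {s : ι} (t : ι) {c : Ω → ℝ} {C : ℝ}
    (hc : Measurable[ℱ s] c) (hcC : ∀ ω, |c ω| ≤ C) :
    Integrable (fun ω => c ω * (X t ω - X s ω)) μ :=
  ((hX.integrable t).sub (hX.integrable s)).bdd_mul
    (hc.mono (ℱ.le s) le_rfl).aestronglyMeasurable (ae_of_all _ hcC)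

lemma integral_mul_sub_of_martingale [SigmaFiniteFiltration μ ℱ] (hX : Martingale X ℱ μ) {s t : ι}
    (hst : s ≤ t) {c : Ω → ℝ} {C : ℝ} (hc : Measurable[ℱ s] c) (hcC : ∀ ω, |c ω| ≤ C) :
    ∫ ω, c ω * (X t ω - X s ω) ∂μ = 0 := by
  have hcond : μ[c * (X t - X s) | ℱ s] =ᵐ[μ] 0 := by
    filter_upwards [condExp_mul_of_stronglyMeasurable_left (g := X t - X s) hc.stronglyMeasurable
        (integrable_mul_sub_of_martingale hX t hc hcC) ((hX.integrable t).sub (hX.integrable s)),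
      condExp_sub (hX.integrable t) (hX.integrable s) (ℱ s), hX.2 s t hst, hX.2 s s le_rfl]
      with ω hmul hsub ht hs
    simp only [hmul, Pi.mul_apply, hsub, Pi.sub_apply, ht, hs, sub_self, mul_zero, Pi.zero_apply]
  calc ∫ ω, c ω * (X t ω - X s ω) ∂μ = ∫ ω, (μ[c * (X t - X s) | ℱ s]) ω ∂μ :=
        (integral_condExp (ℱ.le s)).symm
    _ = 0 := by rw [integral_congr_ae hcond]; exact integral_zero _ _

end MartingaleIncrement

/-- The martingale transform `∑ k < n, a k * (f (k + 1) - f k)` of `f` by `a`, that is, the discrete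
stochastic integral of `a` against `f`. -/
def martingaleTransform {Ω : Type*} (a f : ℕ → Ω → ℝ) (n : ℕ) (ω : Ω) : ℝ :=
  ∑ k ∈ Finset.range n, a k ω * (f (k + 1) ω - f k ω)

section MartingaleTransform

variable {Ω : Type*} {m : MeasurableSpace Ω} {μ : Measure Ω} {𝒢 : Filtration ℕ m}
  {a f : ℕ → Ω → ℝ}

lemma adapted_martingaleTransform (ha : Adapted 𝒢 a) (hf : Adapted 𝒢 f) :
    Adapted 𝒢 (martingaleTransform a f) := fun n =>
  Finset.measurable_fun_sum _ fun k hk =>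
    have hkn : k + 1 ≤ n := Finset.mem_range.mp hk
    ((ha k).mono (𝒢.mono (by lia)) le_rfl).mul
      (((hf (k + 1)).mono (𝒢.mono hkn) le_rfl).sub ((hf k).mono (𝒢.mono (by lia)) le_rfl))

lemma integrable_martingaleTransform (hf : Martingale f 𝒢 μ)
    (ha : Adapted 𝒢 a) {C : ℝ} (haC : ∀ k ω, |a k ω| ≤ C) (n : ℕ) :
    Integrable (martingaleTransform a f n) μ :=
  integrable_finsetSum _ fun k _ => integrable_mul_sub_of_martingale hf _ (ha k) (haC k)

lemma integral_martingaleTransform [SigmaFiniteFiltration μ 𝒢] (hf : Martingale f 𝒢 μ)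
    (ha : Adapted 𝒢 a) {C : ℝ} (haC : ∀ k ω, |a k ω| ≤ C) (n : ℕ) :
    ∫ ω, martingaleTransform a f n ω ∂μ = 0 :=
  calc ∫ ω, martingaleTransform a f n ω ∂μ
      = ∑ k ∈ Finset.range n, ∫ ω, a k ω * (f (k + 1) ω - f k ω) ∂μ :=
        integral_finsetSum _ fun k _ => integrable_mul_sub_of_martingale hf _ (ha k) (haC k)
    _ = 0 := Finset.sum_eq_zero fun k _ =>
        integral_mul_sub_of_martingale hf (Nat.le_succ k) (ha k) (haC k)

/-- The integrand whose transform dominates Burkholder's function of the pair formed by `f` and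
its transform by `a`. -/
noncomputable def burkholderCoeff (a f : ℕ → Ω → ℝ) (k : ℕ) (ω : Ω) : ℝ :=
  burkholderGradFst (f k ω) (martingaleTransform a f k ω) +
    burkholderGradSnd (f k ω) (martingaleTransform a f k ω) * a k ω

lemma adapted_burkholderCoeff (ha : Adapted 𝒢 a) (hf : Adapted 𝒢 f) :
    Adapted 𝒢 (burkholderCoeff a f) := fun k =>
  have hpair : Measurable[𝒢 k] fun ω => (f k ω, martingaleTransform a f k ω) :=
    (hf k).prodMk (adapted_martingaleTransform ha hf k)
  (measurable_burkholderGradFst.comp hpair).add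
    ((measurable_burkholderGradSnd.comp hpair).mul (ha k))

lemma abs_burkholderCoeff_le {k : ℕ} {ω : Ω} (ha : |a k ω| ≤ 1) :
    |burkholderCoeff a f k ω| ≤ 4 :=
  calc |burkholderCoeff a f k ω|
      ≤ |burkholderGradFst (f k ω) (martingaleTransform a f k ω)| +
        |burkholderGradSnd (f k ω) (martingaleTransform a f k ω)| * |a k ω| := by
        rw [← abs_mul]; exact abs_add_le _ _
    _ ≤ 2 + 2 * 1 := by
        gcongr
        · exact abs_burkholderGradFst_le _ _
        · exact abs_burkholderGradSnd_le _ _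
    _ = 4 := by norm_num

lemma burkholderFun_martingaleTransform_le {ω : Ω} (ha : ∀ k, |a k ω| ≤ 1) (n : ℕ) :
    burkholderFun (f n ω) (martingaleTransform a f n ω) ≤
      martingaleTransform (burkholderCoeff a f) f n ω := by
  induction n with
  | zero => exact burkholderFun_zero_right_nonpos _
  | succ n ih =>
    have hstep := burkholderFun_add_le (f n ω) (martingaleTransform a f n ω)
      (h := f (n + 1) ω - f n ω) (k := a n ω * (f (n + 1) ω - f n ω))
      (by rw [abs_mul]; exact mul_le_of_le_one_left (abs_nonneg _) (ha n))
    have hsum : ∀ b : ℕ → Ω → ℝ, martingaleTransform b f (n + 1) ω =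
        martingaleTransform b f n ω + b n ω * (f (n + 1) ω - f n ω) :=
      fun b => Finset.sum_range_succ _ n
    rw [add_sub_cancel] at hstep
    rw [hsum, hsum]
    refine hstep.trans ?_
    rw [burkholderCoeff]
    linarith

variable [IsFiniteMeasure μ]

lemma measureReal_one_le_abs_martingaleTransform_le (hf : Martingale f 𝒢 μ) (ha : Adapted 𝒢 a)
    (ha1 : ∀ k ω, |a k ω| ≤ 1) (n : ℕ) :
    μ.real {ω | 1 ≤ |martingaleTransform a f n ω|} ≤ 2 * ∫ ω, |f n ω| ∂μ := by
  have hfa : Adapted 𝒢 f := fun k => (hf.1 k).measurable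
  set s := {ω | 1 ≤ |martingaleTransform a f n ω|}
  have hsm : MeasurableSet s := measurableSet_le measurable_const
    ((adapted_martingaleTransform ha hfa n).mono (𝒢.le n) le_rfl).abs
  have hpoint : ∀ ω, s.indicator 1 ω - 2 * |f n ω| ≤
      martingaleTransform (burkholderCoeff a f) f n ω := fun ω => by
    refine le_trans ?_ (burkholderFun_martingaleTransform_le (fun k => ha1 k ω) n)
    by_cases hω : ω ∈ s
    · rw [Set.indicator_of_mem hω]
      exact one_sub_two_mul_abs_le_burkholderFun _ hω
    · rw [Set.indicator_of_notMem hω, zero_sub, ← neg_mul]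
      exact neg_two_mul_abs_le_burkholderFun _ _
  have hind : Integrable (s.indicator (1 : Ω → ℝ)) μ := (integrable_const 1).indicator hsm
  have habs : Integrable (fun ω => 2 * |f n ω|) μ := (hf.integrable n).abs.const_mul 2
  have hcoeff : ∀ k ω, |burkholderCoeff a f k ω| ≤ 4 := fun k ω => abs_burkholderCoeff_le (ha1 k ω)
  have hmono := integral_mono (hind.sub habs)
    (integrable_martingaleTransform hf (adapted_burkholderCoeff ha hfa) hcoeff n) hpoint
  rw [integral_martingaleTransform hf (adapted_burkholderCoeff ha hfa) hcoeff] at hmono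
  simp only [Pi.sub_apply] at hmono
  rw [integral_sub hind habs, integral_indicator_one hsm, integral_const_mul] at hmono
  linarith

lemma measureReal_le_abs_martingaleTransform_le (hf : Martingale f 𝒢 μ) (ha : Adapted 𝒢 a)
    {ε δ : ℝ} (hε : 0 < ε) (hδ : 0 < δ) (haε : ∀ k ω, |a k ω| ≤ ε) (n : ℕ) :
    μ.real {ω | δ ≤ |martingaleTransform a f n ω|} ≤ 2 * (ε / δ) * ∫ ω, |f n ω| ∂μ := by
  have hscale : ∀ ω, martingaleTransform (fun k ω => a k ω / ε) ((ε / δ) • f) n ω =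
      martingaleTransform a f n ω / δ := fun ω => by
    simp only [martingaleTransform, Pi.smul_apply, smul_eq_mul, Finset.sum_div]
    refine Finset.sum_congr rfl fun k _ => ?_
    field_simp
  have hweak := measureReal_one_le_abs_martingaleTransform_le (hf.smul (ε / δ))
    (a := fun k ω => a k ω / ε) (fun k => (ha k).div_const ε)
    (fun k ω => by rw [abs_div, abs_of_pos hε]; exact div_le_one_of_le₀ (haε k ω) hε.le) n
  simpa only [hscale, abs_div, abs_of_pos hδ, one_le_div₀ hδ, Pi.smul_apply, smul_eq_mul, abs_mul,
    abs_of_pos hε, integral_const_mul, mul_assoc] using hweak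

lemma measureReal_le_abs_martingaleTransform_le_add (hf : Martingale f 𝒢 μ) (ha : Adapted 𝒢 a)
    {ε δ : ℝ} (hε : 0 < ε) (hδ : 0 < δ) (n : ℕ) :
    μ.real {ω | δ ≤ |martingaleTransform a f n ω|} ≤
      μ.real {ω | ∃ k < n, ε < |a k ω|} + 2 * (ε / δ) * ∫ ω, |f n ω| ∂μ := by
  set b : ℕ → Ω → ℝ := fun k ω => max (-ε) (min (a k ω) ε) with hb
  have hbm : Adapted 𝒢 b := fun k => measurable_const.max ((ha k).min measurable_const)
  have hbε : ∀ k ω, |b k ω| ≤ ε := fun k ω =>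
    abs_le.mpr ⟨le_max_left _ _, max_le (by linarith) (min_le_right _ _)⟩
  have hba : ∀ k ω, |a k ω| ≤ ε → b k ω = a k ω := fun k ω h => by
    simp only [hb, min_eq_left (abs_le.mp h).2, max_eq_right (abs_le.mp h).1]
  have hsub : {ω | δ ≤ |martingaleTransform a f n ω|} ⊆
      {ω | ∃ k < n, ε < |a k ω|} ∪ {ω | δ ≤ |martingaleTransform b f n ω|} := by
    intro ω hω
    by_contra! hnot
    simp only [Set.mem_union, Set.mem_ofPred_eq, not_or, not_exists, not_and, not_lt] at hnot hω
    refine hnot.2 (hω.trans_eq (congrArg _ (Finset.sum_congr rfl fun k hk => ?_)))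
    rw [hba k ω (hnot.1 k (Finset.mem_range.mp hk))]
  calc μ.real {ω | δ ≤ |martingaleTransform a f n ω|}
      ≤ μ.real {ω | ∃ k < n, ε < |a k ω|} + μ.real {ω | δ ≤ |martingaleTransform b f n ω|} :=
        (measureReal_mono hsub).trans (measureReal_union_le _ _)
    _ ≤ _ := by
        gcongr
        exact measureReal_le_abs_martingaleTransform_le hf hbm hε hδ hbε n

end MartingaleTransform

/-! ### Riemann sums against a martingale -/

/-- The discrete filtration obtained by observing `ℱ` along a monotone sequence of times. -/
def sampledFiltration {Ω ι : Type*} {m : MeasurableSpace Ω} [Preorder ι] (ℱ : Filtration ι m)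
    {u : ℕ → ι} (hu : Monotone u) : Filtration ℕ m where
  seq k := ℱ (u k)
  mono' _ _ hkl := ℱ.mono (hu hkl)
  le' k := ℱ.le (u k)

lemma martingale_sampledFiltration {Ω ι : Type*} {m : MeasurableSpace Ω} {μ : Measure Ω}
    [Preorder ι] {ℱ : Filtration ι m} {X : ι → Ω → ℝ} (hX : Martingale X ℱ μ) {u : ℕ → ι}
    (hu : Monotone u) : Martingale (fun k => X (u k)) (sampledFiltration ℱ hu) μ :=
  ⟨fun k => hX.1 (u k), fun _ _ hkl => hX.2 _ _ (hu hkl)⟩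

/-- The left-endpoint Riemann sum of `∫₀ᵗ h dx` along the uniform partition of `[0, t]` into `n`
intervals; it is `0` for `n = 0`. -/
noncomputable def riemannSum (h x : ℝ → ℝ) (t : ℝ) (n : ℕ) : ℝ :=
  ∑ i ∈ Finset.range n, h (t * i / n) * (x (t * (i + 1) / n) - x (t * i / n))

/-- The value of `h` at the `k`-th point of the uniform partition of `[0, t]` into `n * m` intervals
minus its value at the closest point to the left of the coarser partition into `n` intervals. -/
noncomputable def refinementCoeff (h : ℝ → ℝ) (t : ℝ) (n m k : ℕ) : ℝ :=
  h (t * k / (n * m : ℕ)) - h (t * (k / m : ℕ) / n)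

lemma sum_range_mul_mul_sub (f g : ℕ → ℝ) (n : ℕ) {m : ℕ} (hm : m ≠ 0) :
    ∑ k ∈ Finset.range (n * m), f (k / m) * (g (k + 1) - g k) =
      ∑ i ∈ Finset.range n, f i * (g ((i + 1) * m) - g (i * m)) := by
  induction n with
  | zero => rw [zero_mul, Finset.sum_range_zero, Finset.sum_range_zero]
  | succ n ih =>
    have hblock : ∀ j ∈ Finset.range m,
        f ((n * m + j) / m) * (g (n * m + j + 1) - g (n * m + j)) =
          f n * (g (n * m + (j + 1)) - g (n * m + j)) := fun j hj => by
      rw [mul_comm n m, Nat.mul_add_div hm.bot_lt, Nat.div_eq_of_lt (Finset.mem_range.mp hj),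
        add_zero, add_assoc]
    rw [Finset.sum_range_succ, ← ih, Nat.succ_mul, Finset.sum_range_add,
      Finset.sum_congr rfl hblock, ← Finset.mul_sum,
      Finset.sum_range_sub fun j => g (n * m + j), add_zero]

lemma riemannSum_mul_sub_riemannSum (h x : ℝ → ℝ) (t : ℝ) {n m : ℕ} (hn : n ≠ 0) (hm : m ≠ 0) :
    riemannSum h x t (n * m) - riemannSum h x t n =
      ∑ k ∈ Finset.range (n * m), refinementCoeff h t n m k *
        (x (t * (k + 1 : ℕ) / (n * m : ℕ)) - x (t * k / (n * m : ℕ))) := by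
  have hcoarse := sum_range_mul_mul_sub (fun i => h (t * i / n))
    (fun k => x (t * k / (n * m : ℕ))) n hm
  have hpoint : ∀ i : ℕ, t * (i * m : ℕ) / (n * m : ℕ) = t * i / n := fun i => by
    push_cast; field_simp
  simp only [hpoint, Nat.cast_succ] at hcoarse
  simp only [riemannSum, refinementCoeff, sub_mul, Finset.sum_sub_distrib, hcoarse, Nat.cast_succ]

lemma riemannSum_zero_left (h x : ℝ → ℝ) (n : ℕ) : riemannSum h x 0 n = 0 := by
  simp only [riemannSum, zero_mul, zero_div, sub_self, mul_zero, Finset.sum_const_zero]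

lemma riemannSum_mul_div (h x : ℝ → ℝ) (t : ℝ) (a : ℕ) {b : ℕ} (hb : b ≠ 0) (n : ℕ) :
    riemannSum h x (t * a / b) (a * n) = ∑ i ∈ Finset.range (a * n),
      h (t * i / (b * n : ℕ)) * (x (t * (i + 1) / (b * n : ℕ)) - x (t * i / (b * n : ℕ))) := by
  refine Finset.sum_congr rfl fun i hi => ?_
  obtain ⟨ha, hn⟩ : a ≠ 0 ∧ n ≠ 0 :=
    Nat.mul_ne_zero_iff.mp (Nat.zero_lt_of_lt (Finset.mem_range.mp hi)).ne'
  have hpoint : ∀ r : ℝ, t * a / b * r / (a * n : ℕ) = t * r / (b * n : ℕ) := fun r => by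
    push_cast; field_simp
  rw [hpoint, hpoint]

section Refinement

variable {t T : ℝ} {n m k : ℕ}

lemma mul_natCast_div_mem_Icc (ht : t ∈ Set.Icc 0 T) (hk : k ≤ n) : t * k / n ∈ Set.Icc 0 T :=
  have hkn : (k : ℝ) / n ≤ 1 := div_le_one_of_le₀ (by exact_mod_cast hk) (by positivity)
  ⟨by have := ht.1; positivity,
    (mul_div_assoc t (k : ℝ) n).trans_le ((mul_le_of_le_one_right ht.1 hkn).trans ht.2)⟩

lemma coarse_point_le_refined_point (ht : 0 ≤ t) (hn : n ≠ 0) (hm : m ≠ 0) (k : ℕ) :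
    t * (k / m : ℕ) / n ≤ t * k / (n * m : ℕ) := by
  rw [div_le_div_iff₀ (by positivity) (by positivity), mul_assoc, mul_assoc]
  refine mul_le_mul_of_nonneg_left ?_ ht
  have : k / m * (n * m) ≤ k * n := by nlinarith [Nat.div_mul_le_self k m]
  exact_mod_cast this

lemma refined_point_sub_coarse_point_le (ht : 0 ≤ t) (hn : n ≠ 0) (hm : m ≠ 0) (k : ℕ) :
    t * k / (n * m : ℕ) - t * (k / m : ℕ) / n ≤ t / n := by
  have hk : (k : ℝ) ≤ m * ((k / m : ℕ) + 1) := by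
    exact_mod_cast (Nat.lt_mul_div_succ k hm.bot_lt).le
  have hgap : t * k / (n * m : ℕ) - t * (k / m : ℕ) / n = t / n * (k / m - (k / m : ℕ)) := by
    push_cast; field_simp
  rw [hgap]
  refine mul_le_of_le_one_right (by positivity) ?_
  rw [sub_le_iff_le_add, div_le_iff₀ (by positivity)]
  linarith

end Refinement

lemma eventually_abs_refinementCoeff_le {h : ℝ → ℝ} {T : ℝ} (hh : ContinuousOn h (Set.Icc 0 T))
    {ε : ℝ} (hε : 0 < ε) :
    ∀ᶠ n : ℕ in atTop, ∀ t ∈ Set.Icc 0 T, ∀ m ≠ 0, ∀ k < n * m,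
      |refinementCoeff h t n m k| ≤ ε := by
  obtain ⟨η, hη, hunif⟩ := Metric.uniformContinuousOn_iff_le.mp
    (isCompact_Icc.uniformContinuousOn_of_continuous hh) ε hε
  filter_upwards [(tendsto_const_div_atTop_nhds_zero_nat T).eventually_le_const hη,
    eventually_ne_atTop 0] with n hTn hn t ht m hm k hk
  refine hunif _ (mul_natCast_div_mem_Icc ht hk.le) _
    (mul_natCast_div_mem_Icc ht (Nat.div_le_of_le_mul (mul_comm n m ▸ hk.le))) ?_
  rw [Real.dist_eq, abs_of_nonneg (sub_nonneg.mpr (coarse_point_le_refined_point ht.1 hn hm k))]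
  calc t * k / (n * m : ℕ) - t * (k / m : ℕ) / n ≤ t / n :=
        refined_point_sub_coarse_point_le ht.1 hn hm k
    _ ≤ T / n := by gcongr; exact ht.2
    _ ≤ η := hTn

lemma continuousOn_riemannSum {h x : ℝ → ℝ} {T : ℝ} (hh : ContinuousOn h (Set.Icc 0 T))
    (hx : ContinuousOn x (Set.Icc 0 T)) (n : ℕ) :
    ContinuousOn (fun t => riemannSum h x t n) (Set.Icc 0 T) := by
  have hcomp : ∀ {g : ℝ → ℝ}, ContinuousOn g (Set.Icc 0 T) → ∀ i ≤ n,
      ContinuousOn (fun t => g (t * i / n)) (Set.Icc 0 T) := fun hg i hi =>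
    hg.comp (by fun_prop) fun t ht => mul_natCast_div_mem_Icc ht hi
  refine continuousOn_finsetSum _ fun i hi => ?_
  have hin : i + 1 ≤ n := Finset.mem_range.mp hi
  have hsucc := hcomp hx (i + 1) hin
  push_cast at hsucc
  exact (hcomp hh i (by lia)).mul (hsucc.sub (hcomp hx i (by lia)))

section RiemannSumConvergence

variable {Ω : Type*} {m : MeasurableSpace Ω} {μ : Measure Ω} [IsFiniteMeasure μ]
  {ℱ : Filtration ℝ m} {H X I : ℝ → Ω → ℝ} {T : ℝ}

lemma measureReal_le_abs_riemannSum_mul_sub_le (hX : Martingale X ℱ μ) (hH : Adapted ℱ H)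
    {t ε δ : ℝ} (ht : 0 ≤ t) (hε : 0 < ε) (hδ : 0 < δ) {n l : ℕ} (hn : n ≠ 0) (hl : l ≠ 0) :
    μ.real {ω | δ ≤ |riemannSum (H · ω) (X · ω) t (n * l) - riemannSum (H · ω) (X · ω) t n|} ≤
      μ.real {ω | ∃ k < n * l, ε < |refinementCoeff (H · ω) t n l k|} +
        2 * (ε / δ) * ∫ ω, |X t ω| ∂μ := by
  have hu : Monotone fun k : ℕ => t * k / (n * l : ℕ) := fun i j hij => by
    simp only; gcongr
  have hcoeff : Adapted (sampledFiltration ℱ hu) fun k ω => refinementCoeff (H · ω) t n l k :=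
    fun k => (hH _).sub ((hH _).mono (ℱ.mono (coarse_point_le_refined_point ht hn hl k)) le_rfl)
  have hend : t * (n * l : ℕ) / (n * l : ℕ) = t := by field_simp
  have hweak := measureReal_le_abs_martingaleTransform_le_add (martingale_sampledFiltration hX hu)
    hcoeff hε hδ (n * l)
  simp only [hend] at hweak
  simpa only [riemannSum_mul_sub_riemannSum _ _ t hn hl, martingaleTransform] using hweak

lemma tendsto_measureReal_refinementCoeff (hH : ∀ t, Measurable (H t))
    (hHc : ∀ ω, ContinuousOn (H · ω) (Set.Icc 0 T)) {ε : ℝ} (hε : 0 < ε) :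
    Tendsto (fun p : ℕ × ℝ × ℕ =>
        μ.real {ω | ∃ k < p.1 * p.2.2, ε < |refinementCoeff (H · ω) p.2.1 p.1 p.2.2 k|})
      (atTop ×ˢ 𝓟 (Set.Icc 0 T ×ˢ {0}ᶜ)) (nhds 0) := by
  have hmeas : ∀ p : ℕ × ℝ × ℕ, MeasurableSet
      {ω | ∃ k < p.1 * p.2.2, ε < |refinementCoeff (H · ω) p.2.1 p.1 p.2.2 k|} := fun p => by
    simp only [Set.ofPred_exists, Set.ofPred_and]
    exact MeasurableSet.iUnion fun k => (MeasurableSet.const _).inter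
      (measurableSet_lt measurable_const ((hH _).sub (hH _)).abs)
  have hempty : ∀ ω, ∀ᶠ p : ℕ × ℝ × ℕ in atTop ×ˢ 𝓟 (Set.Icc 0 T ×ˢ {0}ᶜ),
      ω ∈ {ω | ∃ k < p.1 * p.2.2, ε < |refinementCoeff (H · ω) p.2.1 p.1 p.2.2 k|} ↔
        ω ∈ (∅ : Set Ω) := fun ω => by
    rw [eventually_prod_principal_iff]
    filter_upwards [eventually_abs_refinementCoeff_le (hHc ω) hε] with n hn p hp
    refine iff_of_false ?_ (Set.notMem_empty ω)
    rintro ⟨k, hk, hlt⟩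
    exact (hn p.1 hp.1 p.2 hp.2 k hk).not_gt hlt
  have := tendsto_measure_of_tendsto_indicator_of_isFiniteMeasure _ μ hmeas hempty
  rw [measure_empty] at this
  exact (ENNReal.tendsto_toReal ENNReal.zero_ne_top).comp this

lemma tendstoInMeasure_riemannSum_mul_sub (hX : Martingale X ℱ μ) (hH : Adapted ℱ H)
    (hHc : ∀ ω, ContinuousOn (H · ω) (Set.Icc 0 T)) :
    TendstoInMeasure μ (fun (p : ℕ × ℝ × ℕ) ω => riemannSum (H · ω) (X · ω) p.2.1 (p.1 * p.2.2) -
        riemannSum (H · ω) (X · ω) p.2.1 p.1)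
      (atTop ×ˢ 𝓟 (Set.Icc 0 T ×ˢ {0}ᶜ)) 0 := by
  rw [tendstoInMeasure_iff_measureReal_norm]
  intro δ hδ
  refine tendsto_order.mpr ⟨fun a ha => .of_forall fun _ => ha.trans_le measureReal_nonneg,
    fun η hη => ?_⟩
  set M := ∫ ω, |X T ω| ∂μ
  have hM : 0 ≤ M := integral_nonneg fun _ => abs_nonneg _
  obtain ⟨ε, hε, hεM⟩ : ∃ ε > 0, 2 * (ε / δ) * M < η / 2 := by
    refine ⟨η * δ / (4 * (M + 1)), by positivity, ?_⟩
    have hsimp : 2 * (η * δ / (4 * (M + 1)) / δ) * M = η / 2 * (M / (M + 1)) := by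
      field_simp; norm_num
    rw [hsimp]
    exact mul_lt_of_lt_one_right (half_pos hη) ((div_lt_one (by positivity)).mpr (lt_add_one M))
  have hbad := (tendsto_measureReal_refinementCoeff (μ := μ) (fun t => (hH t).mono (ℱ.le t) le_rfl)
    hHc hε).eventually_lt_const (half_pos hη)
  rw [eventually_prod_principal_iff] at hbad ⊢
  filter_upwards [hbad, eventually_ne_atTop 0] with n hn hn0 ⟨t, l⟩ ⟨ht, hl⟩
  have hXt : ∫ ω, |X t ω| ∂μ ≤ M :=
    (integral_congr_ae ((hX.2 t T ht.2).fun_comp abs)).symm.trans_le (integral_abs_condExp_le _)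
  simp only [Pi.zero_apply, sub_zero, Real.norm_eq_abs]
  calc _ ≤ _ := measureReal_le_abs_riemannSum_mul_sub_le hX hH ht.1 hε hδ hn0 hl
    _ < η / 2 + η / 2 := add_lt_add_of_lt_of_le (hn _ ⟨ht, hl⟩)
        ((mul_le_mul_of_nonneg_left hXt (by positivity)).trans hεM.le)
    _ = η := add_halves η

lemma tendstoInMeasure_riemannSum_sub (hX : Martingale X ℱ μ) (hH : Adapted ℱ H)
    (hHc : ∀ ω, ContinuousOn (H · ω) (Set.Icc 0 T))
    (hI : ∀ t ∈ Set.Icc 0 T,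
      TendstoInMeasure μ (fun n ω => riemannSum (H · ω) (X · ω) t n) atTop (I t)) :
    TendstoInMeasure μ (fun (p : ℕ × ℝ) ω => riemannSum (H · ω) (X · ω) p.2 p.1 - I p.2 ω)
      (atTop ×ˢ 𝓟 (Set.Icc 0 T)) 0 := by
  have hrefine := tendstoInMeasure_riemannSum_mul_sub hX hH hHc
  rw [tendstoInMeasure_iff_measureReal_norm] at hrefine ⊢
  intro δ hδ
  refine tendsto_order.mpr ⟨fun a ha => .of_forall fun _ => ha.trans_le measureReal_nonneg,
    fun η hη => ?_⟩
  have hunif := (hrefine (δ / 2) (half_pos hδ)).eventually_lt_const (half_pos hη)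
  rw [eventually_prod_principal_iff] at hunif ⊢
  filter_upwards [hunif, eventually_gt_atTop 0] with n hn hn0 t ht
  have hlim := (tendstoInMeasure_iff_measureReal_norm.mp
    ((hI t ht).comp (tendsto_id.const_mul_atTop' hn0))) (δ / 2) (half_pos hδ)
  obtain ⟨l, hl, hl0⟩ :=
    ((hlim.eventually_lt_const (half_pos hη)).and (eventually_ne_atTop 0)).exists
  have hnl := hn (t, l) ⟨ht, hl0⟩
  have hadd := measureReal_le_norm_add_le μ
    (fun ω => riemannSum (H · ω) (X · ω) t (n * l) - I t ω)
    (fun ω => -(riemannSum (H · ω) (X · ω) t (n * l) - riemannSum (H · ω) (X · ω) t n)) δ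
  have hsum : ∀ ω, riemannSum (H · ω) (X · ω) t (n * l) - I t ω +
      -(riemannSum (H · ω) (X · ω) t (n * l) - riemannSum (H · ω) (X · ω) t n) =
      riemannSum (H · ω) (X · ω) t n - I t ω := fun ω => by ring
  simp only [hsum, norm_neg] at hadd
  simp only [Pi.zero_apply, sub_zero, Function.comp_apply, id_eq] at hl hnl ⊢
  linarith

lemma tendstoInMeasure_riemannSum_limit (hX : Martingale X ℱ μ)
    (hXc : ∀ ω, ContinuousOn (X · ω) (Set.Icc 0 T)) (hH : Adapted ℱ H)
    (hHc : ∀ ω, ContinuousOn (H · ω) (Set.Icc 0 T))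
    (hI : ∀ t ∈ Set.Icc 0 T,
      TendstoInMeasure μ (fun n ω => riemannSum (H · ω) (X · ω) t n) atTop (I t))
    {c : ℕ → ℝ} {s : ℝ} (hc : ∀ k, c k ∈ Set.Icc 0 T) (hs : s ∈ Set.Icc 0 T)
    (hcs : Tendsto c atTop (nhds s)) :
    TendstoInMeasure μ (fun k => I (c k)) atTop (I s) := by
  have hmeas : ∀ n t, Measurable fun ω => riemannSum (H · ω) (X · ω) t n := fun n t =>
    Finset.measurable_fun_sum _ fun i _ => ((hH _).mono (ℱ.le _) le_rfl).mul
      (((hX.1 _).measurable.mono (ℱ.le _) le_rfl).sub ((hX.1 _).measurable.mono (ℱ.le _) le_rfl))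
  refine tendstoInMeasure_comp_of_uniform_limit
    (F := fun n t ω => riemannSum (H · ω) (X · ω) t n)
    (tendstoInMeasure_riemannSum_sub hX hH hHc hI) hc hs fun n => ?_
  exact tendstoInMeasure_of_tendsto_ae (fun k => (hmeas n (c k)).aestronglyMeasurable)
    (ae_of_all _ fun ω => (continuousOn_riemannSum (hHc ω) (hXc ω) n s hs).tendsto.comp
      (tendsto_nhdsWithin_iff.mpr ⟨hcs, .of_forall hc⟩))

lemma ae_eq_zero_of_tendstoInMeasure_riemannSum
    (hI : TendstoInMeasure μ (fun n ω => riemannSum (H · ω) (X · ω) 0 n) atTop (I 0)) :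
    I 0 =ᵐ[μ] 0 := by
  simp only [riemannSum_zero_left] at hI
  exact tendstoInMeasure_ae_unique hI (tendstoInMeasure_of_tendsto_ae
    (fun _ => aestronglyMeasurable_const) (ae_of_all _ fun _ => tendsto_const_nhds))

end RiemannSumConvergence

/-! ### Supergradient inequalities along Riemann sums -/

lemma le_add_mul_sub_of_concaveOn_of_hasDerivAt {f : ℝ → ℝ} (hf : ConcaveOn ℝ Set.univ f) {f' x : ℝ}
    (hd : HasDerivAt f f' x) (y : ℝ) : f y ≤ f x + f' * (y - x) := by
  rcases lt_trichotomy x y with hxy | rfl | hyx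
  · have := hf.slope_le_of_hasDerivAt (Set.mem_univ x) (Set.mem_univ y) hxy hd
    rw [slope_def_field, div_le_iff₀ (sub_pos.mpr hxy)] at this
    linarith
  · rw [sub_self, mul_zero, add_zero]
  · have := hf.le_slope_of_hasDerivAt (Set.mem_univ y) (Set.mem_univ x) hyx hd
    rw [slope_def_field, le_div_iff₀ (sub_pos.mpr hyx)] at this
    linarith

lemma exists_seq_mul_div_tendsto {s t : ℝ} (hs : 0 ≤ s) (hst : s ≤ t) :
    ∃ a b : ℕ → ℕ, (∀ k, b k ≠ 0 ∧ a k ≤ b k ∧ s ≤ t * a k / b k) ∧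
      Tendsto (fun k => t * a k / b k) atTop (nhds s) := by
  have ht : 0 ≤ t := hs.trans hst
  have hdiv : t * (s / t) = s := mul_div_cancel_of_imp' fun h => le_antisymm (h ▸ hst) hs
  have hceil : ∀ x : ℝ, 0 ≤ x → ⌈s / t * x⌉₊ ≤ ⌈x⌉₊ := fun x hx =>
    Nat.ceil_mono (mul_le_of_le_one_left hx (div_le_one_of_le₀ hst ht))
  refine ⟨fun k => ⌈s / t * (k + 1 : ℕ)⌉₊, fun k => k + 1, fun k => ⟨k.succ_ne_zero, ?_, ?_⟩, ?_⟩
  · simpa only [Nat.ceil_natCast] using hceil (k + 1 : ℕ) (by positivity)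
  · rw [le_div_iff₀ (by positivity)]
    calc s * (k + 1 : ℕ) = t * (s / t * (k + 1 : ℕ)) := by rw [← mul_assoc, hdiv]
      _ ≤ t * ⌈s / t * (k + 1 : ℕ)⌉₊ := mul_le_mul_of_nonneg_left (Nat.le_ceil _) ht
  · have hlim := ((tendsto_nat_ceil_mul_div_atTop (div_nonneg hs ht)).comp
      (tendsto_natCast_atTop_atTop.comp (tendsto_add_atTop_nat 1))).const_mul t
    rw [hdiv] at hlim
    exact hlim.congr fun k => (mul_div_assoc _ _ _).symm

section Supergradient

variable {v w : ℝ → ℝ → ℝ} {T : ℝ}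

lemma le_add_mul_sub_of_antitoneOn (hw : ∀ t x y, v t y ≤ v t x + w t x * (y - x))
    (hv : ∀ x, AntitoneOn (v · x) (Set.Icc 0 T)) {s t : ℝ} (hs : s ∈ Set.Icc 0 T)
    (ht : t ∈ Set.Icc 0 T) (hst : s ≤ t) (x y : ℝ) : v t y ≤ v s x + w s x * (y - x) :=
  (hv y hs ht hst).trans (hw s x y)

lemma sub_le_riemannSum_sub (hw : ∀ t x y, v t y ≤ v t x + w t x * (y - x))
    (hv : ∀ x, AntitoneOn (v · x) (Set.Icc 0 T)) (x : ℝ → ℝ) {t : ℝ} (ht : t ∈ Set.Icc 0 T)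
    {a b n : ℕ} (hab : a ≤ b) (hb : b ≠ 0) (hn : n ≠ 0) :
    v t (x t) - v (t * a / b) (x (t * a / b)) ≤
      riemannSum (fun r => w r (x r)) x t (b * n) -
        riemannSum (fun r => w r (x r)) x (t * a / b) (a * n) := by
  set u : ℕ → ℝ := fun i => t * i / (b * n : ℕ) with hu
  have hua : u (a * n) = t * a / b := by simp only [hu]; push_cast; field_simp
  have hub : u (b * n) = t := by simp only [hu]; field_simp
  have hle : a * n ≤ b * n := Nat.mul_le_mul_right n hab
  have hstep : ∀ i ∈ Finset.Ico (a * n) (b * n), v (u (i + 1)) (x (u (i + 1))) - v (u i) (x (u i)) ≤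
      w (u i) (x (u i)) * (x (u (i + 1)) - x (u i)) := fun i hi => by
    have hin : i + 1 ≤ b * n := (Finset.mem_Ico.mp hi).2
    have hui : u i ≤ u (i + 1) := by
      have := ht.1
      simp only [hu]; gcongr; exact i.le_succ
    exact sub_le_iff_le_add'.mpr (le_add_mul_sub_of_antitoneOn hw hv
      (mul_natCast_div_mem_Icc ht (by lia)) (mul_natCast_div_mem_Icc ht hin) hui _ _)
  calc v t (x t) - v (t * a / b) (x (t * a / b))
      = ∑ i ∈ Finset.Ico (a * n) (b * n), (v (u (i + 1)) (x (u (i + 1))) - v (u i) (x (u i))) := by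
        rw [Finset.sum_Ico_sub (fun i => v (u i) (x (u i))) hle, hua, hub]
    _ ≤ ∑ i ∈ Finset.Ico (a * n) (b * n), w (u i) (x (u i)) * (x (u (i + 1)) - x (u i)) :=
        Finset.sum_le_sum hstep
    _ = _ := by
        rw [riemannSum_mul_div _ _ _ _ hb, riemannSum, Finset.sum_Ico_eq_sub _ hle]
        simp only [hu, Nat.cast_succ]

variable {Ω : Type*} {m : MeasurableSpace Ω} {μ : Measure Ω} {ℱ : Filtration ℝ m}
  {X I : ℝ → Ω → ℝ}

lemma ae_sub_le_sub_of_commensurable (hw : ∀ t x y, v t y ≤ v t x + w t x * (y - x))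
    (hv : ∀ x, AntitoneOn (v · x) (Set.Icc 0 T))
    (hI : ∀ t ∈ Set.Icc 0 T,
      TendstoInMeasure μ (fun n ω => riemannSum (fun r => w r (X r ω)) (X · ω) t n) atTop (I t))
    {t : ℝ} (ht : t ∈ Set.Icc 0 T) {a b : ℕ} (hab : a ≤ b) (hb : b ≠ 0) :
    ∀ᵐ ω ∂μ, v t (X t ω) - v (t * a / b) (X (t * a / b) ω) ≤ I t ω - I (t * a / b) ω := by
  have hlim_t := (hI t ht).comp (tendsto_id.const_mul_atTop' hb.bot_lt)
  have hlim_c : TendstoInMeasure μ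
      (fun n ω => riemannSum (fun r => w r (X r ω)) (X · ω) (t * a / b) (a * n)) atTop
      (I (t * a / b)) := by
    have hI_c := hI _ (mul_natCast_div_mem_Icc ht hab)
    rcases eq_or_ne a 0 with rfl | ha
    · simp only [Nat.cast_zero, mul_zero, zero_div, riemannSum_zero_left] at hI_c ⊢
      exact hI_c
    · exact hI_c.comp (tendsto_id.const_mul_atTop' ha.bot_lt)
  obtain ⟨p, hp, hp_t⟩ := hlim_t.exists_seq_tendsto_ae
  obtain ⟨q, hq, hq_c⟩ := (hlim_c.comp hp.tendsto_atTop).exists_seq_tendsto_ae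
  filter_upwards [hp_t, hq_c] with ω hω_t hω_c
  refine ge_of_tendsto ((hω_t.comp hq.tendsto_atTop).sub hω_c) ?_
  filter_upwards [(hp.tendsto_atTop.comp hq.tendsto_atTop).eventually_ne_atTop 0] with k hk
  exact sub_le_riemannSum_sub hw hv (X · ω) ht hab hb hk

lemma ae_sub_le_sub [IsFiniteMeasure μ] (hw : ∀ t x y, v t y ≤ v t x + w t x * (y - x))
    (hwc : Continuous fun p : ℝ × ℝ => w p.1 p.2) (hv : ∀ x, AntitoneOn (v · x) (Set.Icc 0 T))
    (hX : Martingale X ℱ μ) (hXc : ∀ ω, Continuous (X · ω))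
    (hI : ∀ t ∈ Set.Icc 0 T,
      TendstoInMeasure μ (fun n ω => riemannSum (fun r => w r (X r ω)) (X · ω) t n) atTop (I t))
    {s t : ℝ} (hs : s ∈ Set.Icc 0 T) (ht : t ∈ Set.Icc 0 T) (hst : s ≤ t) :
    ∀ᵐ ω ∂μ, v t (X t ω) - v s (X s ω) ≤ I t ω - I s ω := by
  have hwX : Adapted ℱ fun r ω => w r (X r ω) := fun r =>
    (hwc.comp (Continuous.prodMk_right r)).measurable.comp (hX.1 r).measurable
  obtain ⟨a, b, hab, hcs⟩ := exists_seq_mul_div_tendsto hs.1 hst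
  have hc : ∀ k, t * a k / b k ∈ Set.Icc 0 T := fun k => mul_natCast_div_mem_Icc ht (hab k).2.1
  have hIc := tendstoInMeasure_riemannSum_limit hX (fun ω => (hXc ω).continuousOn) hwX
    (fun ω => (hwc.comp (continuous_id.prodMk (hXc ω))).continuousOn) hI hc hs hcs
  obtain ⟨p, hp, hIp⟩ := hIc.exists_seq_tendsto_ae
  filter_upwards [hIp, ae_all_iff.mpr fun k =>
    ae_sub_le_sub_of_commensurable hw hv hI ht (hab k).2.1 (hab k).1] with ω hω_I hω_le
  -- Since `s ≤ t * a k / b k`, the supergradient at `s` bounds `v` at these times from above.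
  have hXp : Tendsto (fun k => v s (X s ω) +
      w s (X s ω) * (X (t * a (p k) / b (p k)) ω - X s ω)) atTop (nhds (v s (X s ω))) := by
    have := ((((hXc ω).tendsto s).comp (hcs.comp hp.tendsto_atTop)).sub_const
      (X s ω)).const_mul (w s (X s ω)) |>.const_add (v s (X s ω))
    rwa [sub_self, mul_zero, add_zero] at this
  refine le_of_tendsto_of_tendsto' (tendsto_const_nhds.sub hXp) (tendsto_const_nhds.sub hω_I)
    fun k => le_trans (sub_le_sub_left ?_ _) (hω_le (p k))
  exact le_add_mul_sub_of_antitoneOn hw hv hs (hc (p k)) (hab (p k)).2.2 _ _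

end Supergradient

/-! ### Modifications with decreasing paths -/

lemma exists_countable_subset_Icc_forall_lt_add {φ : ℝ → ℝ} {a b : ℝ}
    (hφ : AntitoneOn φ (Set.Icc a b)) (hab : a ≤ b) :
    ∃ S ⊆ Set.Icc a b, S.Countable ∧ a ∈ S ∧ b ∈ S ∧
      ∀ t ∈ Set.Icc a b, ∀ ε > 0, ∃ s ∈ S, s ≤ t ∧ φ s < φ t + ε := by
  set J := {t ∈ Set.Icc a b | ¬ContinuousWithinAt φ (Set.Icc a b) t} with hJ
  have ha : a ∈ Set.Icc a b := Set.left_mem_Icc.mpr hab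
  refine ⟨Set.Icc a b ∩ ({a, b} ∪ J ∪ Set.range ((↑) : ℚ → ℝ)), Set.inter_subset_left, ?_,
    ⟨ha, by simp⟩, ⟨Set.right_mem_Icc.mpr hab, by simp⟩, fun t ht ε hε => ?_⟩
  · exact ((((Set.countable_singleton b).insert a).union
      hφ.countable_not_continuousWithinAt).union (Set.countable_range _)).mono
      Set.inter_subset_right
  by_cases htS : t ∈ {a, b} ∪ J
  · exact ⟨t, ⟨ht, .inl htS⟩, le_rfl, by linarith⟩
  · simp only [hJ, Set.mem_union, Set.mem_insert_iff, Set.mem_singleton_iff, Set.mem_ofPred_eq,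
      not_or, not_and, not_not] at htS
    have hat : a < t := lt_of_le_of_ne ht.1 (Ne.symm htS.1.1)
    have hnear : ∀ᶠ s in nhdsWithin t (Set.Iio t), φ s < φ t + ε := by
      rw [← nhdsWithin_Ico_eq_nhdsLT hat]
      exact ((htS.2 ht).mono fun s hs => ⟨hs.1, hs.2.le.trans ht.2⟩).eventually_lt_const
        (lt_add_of_pos_right _ hε)
    obtain ⟨l, hl, hlt⟩ := (mem_nhdsLT_iff_exists_Ioo_subset' hat).mp hnear
    obtain ⟨r, hr, hrt⟩ := exists_rat_btwn (max_lt hl hat)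
    obtain ⟨hlr, har⟩ := max_lt_iff.mp hr
    exact ⟨r, ⟨⟨har.le, hrt.le.trans ht.2⟩, .inr ⟨r, rfl⟩⟩, hrt.le, hlt ⟨hlr, hrt⟩⟩

/-- The infimum of `φ` over the points of `S` up to `t`, with the value `0` if there are none or if
`φ` is unbounded below on them. -/
noncomputable def runningInf (S : Set ℝ) (φ : ℝ → ℝ) (t : ℝ) : ℝ :=
  ⨅ s : {s // s ∈ S ∧ s ≤ t}, φ s

section RunningInf

variable {S : Set ℝ} {φ : ℝ → ℝ} {a b s t : ℝ}

lemma runningInf_le (hφ : AntitoneOn φ S) (hb : IsGreatest S b) (hs : s ∈ S) (hst : s ≤ t) :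
    runningInf S φ t ≤ φ s :=
  ciInf_le ⟨φ b, Set.forall_mem_range.mpr fun r => hφ r.2.1 hb.1 (hb.2 r.2.1)⟩
    (⟨s, hs, hst⟩ : {s // s ∈ S ∧ s ≤ t})

lemma le_runningInf {y : ℝ} (hs : s ∈ S) (hst : s ≤ t) (hy : ∀ r ∈ S, r ≤ t → y ≤ φ r) :
    y ≤ runningInf S φ t :=
  have : Nonempty {s // s ∈ S ∧ s ≤ t} := ⟨s, hs, hst⟩
  le_ciInf fun r => hy r r.2.1 r.2.2

lemma antitoneOn_runningInf (hφ : AntitoneOn φ S) (hb : IsGreatest S b) (ha : a ∈ S) :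
    AntitoneOn (runningInf S φ) (Set.Ici a) := fun _ hs _ _ hst =>
  le_runningInf ha hs fun _ hr hrs => runningInf_le hφ hb hr (hrs.trans hst)

lemma adapted_runningInf {Ω : Type*} {m : MeasurableSpace Ω} {ℱ : Filtration ℝ m} {D : ℝ → Ω → ℝ}
    (hS : S.Countable) (hD : ∀ s ∈ S, Measurable[ℱ s] (D s)) :
    Adapted ℱ fun t ω => runningInf S (D · ω) t := fun t =>
  have : Countable {s // s ∈ S ∧ s ≤ t} := (hS.mono fun _ hs => hs.1).to_subtype
  Measurable.iInf fun s => (hD s s.2.1).mono (ℱ.mono s.2.2) le_rfl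

end RunningInf

section AntitoneModification

variable {Ω : Type*} {m : MeasurableSpace Ω} {μ : Measure Ω}

lemma ae_antitoneOn_of_countable {D : ℝ → Ω → ℝ} {S : Set ℝ} (hS : S.Countable)
    (hD : ∀ s ∈ S, ∀ t ∈ S, s ≤ t → D t ≤ᵐ[μ] D s) : ∀ᵐ ω ∂μ, AntitoneOn (D · ω) S := by
  have hall : ∀ᵐ ω ∂μ, ∀ s ∈ S, ∀ t ∈ S, s ≤ t → D t ω ≤ D s ω := by
    simp only [ae_ball_iff hS, eventually_imp_distrib_left]
    exact hD
  exact hall.mono fun _ hω s hs t ht => hω s hs t ht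

variable [IsFiniteMeasure μ]

lemma integrable_arctan {f : Ω → ℝ} (hf : Measurable f) :
    Integrable (fun ω => Real.arctan (f ω)) μ :=
  .of_bound (Real.measurable_arctan.comp hf).aestronglyMeasurable (Real.pi / 2)
    (ae_of_all _ fun _ => abs_le.mpr
      ⟨(Real.neg_pi_div_two_lt_arctan _).le, (Real.arctan_lt_pi_div_two _).le⟩)

lemma integral_arctan_mono {f g : Ω → ℝ} (hf : Measurable f) (hg : Measurable g) (hfg : f ≤ᵐ[μ] g) :
    ∫ ω, Real.arctan (f ω) ∂μ ≤ ∫ ω, Real.arctan (g ω) ∂μ :=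
  integral_mono_ae (integrable_arctan hf) (integrable_arctan hg)
    (hfg.mono fun _ h => Real.arctan_strictMono.monotone h)

lemma ae_eq_of_ae_le_of_integral_arctan_le {f g : Ω → ℝ} (hf : Measurable f) (hg : Measurable g)
    (hfg : f ≤ᵐ[μ] g) (hgf : ∫ ω, Real.arctan (g ω) ∂μ ≤ ∫ ω, Real.arctan (f ω) ∂μ) : f =ᵐ[μ] g :=
  ((integral_eq_iff_of_ae_le (integrable_arctan hf) (integrable_arctan hg)
    (hfg.mono fun _ h => Real.arctan_strictMono.monotone h)).mp
    ((integral_arctan_mono hf hg hfg).antisymm hgf)).mono fun _ h => Real.arctan_injective h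

/- Monotonicity holds off a common null set only along a countable set of times. That set is chosen
so that no mass is lost in the infimum; composing with `arctan` makes the expectations finite. -/
lemma exists_adapted_antitoneOn_modification {ℱ : Filtration ℝ m} {D : ℝ → Ω → ℝ} {a b : ℝ}
    (hab : a ≤ b) (hDm : ∀ t ∈ Set.Icc a b, Measurable[ℱ t] (D t))
    (hD : ∀ s ∈ Set.Icc a b, ∀ t ∈ Set.Icc a b, s ≤ t → D t ≤ᵐ[μ] D s) :
    ∃ K : ℝ → Ω → ℝ, Adapted ℱ K ∧ (∀ᵐ ω ∂μ, AntitoneOn (K · ω) (Set.Icc a b)) ∧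
      ∀ t ∈ Set.Icc a b, K t =ᵐ[μ] D t := by
  have hDm' : ∀ t ∈ Set.Icc a b, Measurable (D t) := fun t ht => (hDm t ht).mono (ℱ.le t) le_rfl
  obtain ⟨S, hSab, hS, ha, hb, happrox⟩ := exists_countable_subset_Icc_forall_lt_add
    (φ := fun t => ∫ ω, Real.arctan (D t ω) ∂μ)
    (fun s hs t ht hst => integral_arctan_mono (hDm' t ht) (hDm' s hs) (hD s hs t ht hst)) hab
  have hgreatest : IsGreatest S b := ⟨hb, fun s hs => (hSab hs).2⟩
  have hanti : ∀ᵐ ω ∂μ, AntitoneOn (D · ω) S :=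
    ae_antitoneOn_of_countable hS fun s hs t ht => hD s (hSab hs) t (hSab ht)
  have hKadapted := adapted_runningInf hS fun s hs => hDm s (hSab hs)
  refine ⟨fun t ω => runningInf S (D · ω) t, hKadapted, ?_, fun t ht => ?_⟩
  · filter_upwards [hanti] with ω hω
    exact (antitoneOn_runningInf hω hgreatest ha).mono Set.Icc_subset_Ici_self
  have hKm := (hKadapted t).mono (ℱ.le t) le_rfl
  have hDK : D t ≤ᵐ[μ] fun ω => runningInf S (D · ω) t := by
    have hall : ∀ᵐ ω ∂μ, ∀ s ∈ S, s ≤ t → D t ω ≤ D s ω := by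
      simp only [ae_ball_iff hS, eventually_imp_distrib_left]
      exact fun s hs => hD s (hSab hs) t ht
    exact hall.mono fun _ => le_runningInf ha ht.1
  refine (ae_eq_of_ae_le_of_integral_arctan_le (hDm' t ht) hKm hDK ?_).symm
  refine le_of_forall_pos_lt_add fun ε hε => ?_
  obtain ⟨s, hs, hst, hlt⟩ := happrox t ht ε hε
  refine (integral_arctan_mono hKm (hDm' s (hSab hs)) ?_).trans_lt hlt
  filter_upwards [hanti] with ω hω using runningInf_le hω hgreatest hs hst

end AntitoneModification

/-! ### The Itô–Tanaka formula -/

lemma integrable_comp_of_hasDerivAt_of_abs_le {Ω : Type*} {m : MeasurableSpace Ω} {μ : Measure Ω}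
    [IsFiniteMeasure μ] {f f' : ℝ → ℝ} {C : ℝ} (hf : ∀ x, HasDerivAt f (f' x) x)
    (hC : ∀ x, |f' x| ≤ C) {X : Ω → ℝ} (hX : Integrable X μ) : Integrable (fun ω => f (X ω)) μ := by
  have hcont : Continuous f := continuous_iff_continuousAt.mpr fun x => (hf x).continuousAt
  refine ((integrable_const |f 0|).add (hX.abs.const_mul C)).mono'
    (hcont.comp_aestronglyMeasurable hX.1) (ae_of_all _ fun ω => ?_)
  have hlip : |f (X ω) - f 0| ≤ C * |X ω - 0| :=
    convex_univ.norm_image_sub_le_of_norm_hasDerivWithin_le (fun x _ => (hf x).hasDerivWithinAt)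
      (fun x _ => hC x) (Set.mem_univ 0) (Set.mem_univ (X ω))
  rw [sub_zero] at hlip
  calc |f (X ω)| = |f 0 + (f (X ω) - f 0)| := by rw [add_sub_cancel]
    _ ≤ |f 0| + C * |X ω| := (abs_add_le _ _).trans (add_le_add_right hlip _)

lemma condExp_ae_le_of_ae_le {Ω : Type*} {m' m : MeasurableSpace Ω} {μ : Measure Ω}
    [IsFiniteMeasure μ] (hm : m' ≤ m) {f g : Ω → ℝ} (hf : Integrable f μ) (hg : Integrable g μ)
    (hgm : StronglyMeasurable[m'] g) (hfg : f ≤ᵐ[μ] g) : μ[f|m'] ≤ᵐ[μ] g :=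
  (condExp_mono hf hg hfg).trans_eq
    (EventuallyEq.of_eq (condExp_of_stronglyMeasurable hm hgm hg))

theorem stmt18_general {Ω : Type*} {m : MeasurableSpace Ω} (μ : Measure Ω) [IsFiniteMeasure μ]
    (ℱ : Filtration ℝ m) {T : ℝ} (hT : 0 ≤ T) {X : ℝ → Ω → ℝ} (hX : Martingale X ℱ μ)
    (hXc : ∀ ω, Continuous fun t => X t ω) {v vx : ℝ → ℝ → ℝ}
    (hvconc : ∀ t, ConcaveOn ℝ Set.univ (v t))
    (hvmono : ∀ x, AntitoneOn (fun t => v t x) (Set.Icc 0 T))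
    (hvx : ∀ t x, HasDerivAt (v t) (vx t x) x)
    (hvxc : Continuous fun p : ℝ × ℝ => vx p.1 p.2)
    (hvint : ∀ t ∈ Set.Icc 0 T, Integrable (fun ω => v t (X t ω)) μ)
    {I : ℝ → Ω → ℝ} (hIadapted : Adapted ℱ I) (hIint : ∀ t ∈ Set.Icc 0 T, Integrable (I t) μ)
    (hI : ∀ t ∈ Set.Icc 0 T, TendstoInMeasure μ
      (fun n ω => riemannSum (fun s => vx s (X s ω)) (fun s => X s ω) t n) atTop (I t)) :
    ∃ K : ℝ → Ω → ℝ, Adapted ℱ K ∧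
      (∀ᵐ ω ∂μ, K 0 ω = 0 ∧ AntitoneOn (fun t => K t ω) (Set.Icc 0 T)) ∧
      (∀ t ∈ Set.Icc 0 T, ∀ᵐ ω ∂μ, v t (X t ω) = v 0 (X 0 ω) + I t ω + K t ω) ∧
      (∀ s ∈ Set.Icc 0 T, ∀ t ∈ Set.Icc 0 T, s ≤ t →
        (μ[fun ω => v t (X t ω) - I t ω|ℱ s]) ≤ᵐ[μ] fun ω => v s (X s ω) - I s ω) := by
  have hvX : ∀ s t, s ≤ t → Measurable[ℱ t] fun ω => v s (X s ω) := fun s t hst =>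
    (continuous_iff_continuousAt.mpr fun x => (hvx s x).continuousAt).measurable.comp
      ((hX.1 s).measurable.mono (ℱ.mono hst) le_rfl)
  have hincr : ∀ s ∈ Set.Icc 0 T, ∀ t ∈ Set.Icc 0 T, s ≤ t →
      ∀ᵐ ω ∂μ, v t (X t ω) - v s (X s ω) ≤ I t ω - I s ω := fun s hs t ht =>
    ae_sub_le_sub (fun t x => le_add_mul_sub_of_concaveOn_of_hasDerivAt (hvconc t) (hvx t x))
      hvxc hvmono hX hXc hI hs ht
  have h0 : (0 : ℝ) ∈ Set.Icc 0 T := Set.left_mem_Icc.mpr hT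
  obtain ⟨K, hKadapted, hKanti, hKeq⟩ := exists_adapted_antitoneOn_modification hT
    (D := fun t ω => v t (X t ω) - v 0 (X 0 ω) - I t ω)
    (fun t ht => ((hvX t t le_rfl).sub (hvX 0 t ht.1)).sub (hIadapted t))
    (fun s hs t ht hst => (hincr s hs t ht hst).mono fun _ hω => by simp only; linarith)
  refine ⟨K, hKadapted, ?_, fun t ht => ?_, fun s hs t ht hst => ?_⟩
  · filter_upwards [hKanti, hKeq 0 h0, ae_eq_zero_of_tendstoInMeasure_riemannSum (hI 0 h0)]
      with ω hanti hK0 hI0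
    exact ⟨by rw [hK0, hI0, Pi.zero_apply, sub_self, sub_zero], hanti⟩
  · filter_upwards [hKeq t ht] with ω hω
    rw [hω]; ring
  · refine condExp_ae_le_of_ae_le (ℱ.le s) ((hvint t ht).sub (hIint t ht))
      ((hvint s hs).sub (hIint s hs)) ((hvX s s le_rfl).sub (hIadapted s)).stronglyMeasurable ?_
    filter_upwards [hincr s hs t ht hst] with ω hω
    linarith

/-- Markovian Itô–Tanaka formula for a `C^{0,1}` function `v(t,x)` that is
concave in `x` and non-increasing in `t`, along a continuous martingale `X`:
`v(t,X_t) = v(0,X_0) + ∫₀ᵗ ∂ₓv(s,X_s) dX_s + K_t` for a non-increasing adapted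
process `K` with `K_0 = 0`; in particular `v(·,X) − ∫ ∂ₓv dX` is a
supermartingale on `[0,T]`. The stochastic integral `I` is characterized as
the limit in measure of Riemann sums along uniform partitions. -/
theorem stmt18 {Ω : Type*} {m : MeasurableSpace Ω} (ℙ : Measure Ω)
    [IsProbabilityMeasure ℙ] (ℱ : Filtration ℝ m)
    (T : ℝ) (hT : 0 < T)
    (X : ℝ → Ω → ℝ) (hX : Martingale X ℱ ℙ)
    (hXc : ∀ ω, Continuous fun t => X t ω)
    (v : ℝ → ℝ → ℝ) (hv : Continuous fun p : ℝ × ℝ => v p.1 p.2)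
    (hvconc : ∀ t, ConcaveOn ℝ Set.univ (v t))
    (hvmono : ∀ x : ℝ, AntitoneOn (fun t => v t x) (Set.Icc 0 T))
    (vx : ℝ → ℝ → ℝ)
    (hvx : ∀ t x, HasDerivAt (v t) (vx t x) x)
    (hvxc : Continuous fun p : ℝ × ℝ => vx p.1 p.2)
    (Cb : ℝ) (hvxb : ∀ t x, |vx t x| ≤ Cb)
    (I : ℝ → Ω → ℝ) (hIadapted : Adapted ℱ I)
    (hIint : ∀ t, Integrable (I t) ℙ)
    (hI : ∀ t ∈ Set.Icc (0 : ℝ) T,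
      TendstoInMeasure ℙ
        (fun n : ℕ => fun ω => ∑ i ∈ Finset.range n,
          vx (t * i / n) (X (t * i / n) ω) *
            (X (t * (i + 1) / n) ω - X (t * i / n) ω))
        atTop (I t)) :
    ∃ K : ℝ → Ω → ℝ, Adapted ℱ K ∧
      (∀ᵐ ω ∂ℙ, K 0 ω = 0 ∧ AntitoneOn (fun t => K t ω) (Set.Icc 0 T)) ∧
      (∀ t ∈ Set.Icc (0 : ℝ) T, ∀ᵐ ω ∂ℙ,
        v t (X t ω) = v 0 (X 0 ω) + I t ω + K t ω) ∧
      (∀ s ∈ Set.Icc (0 : ℝ) T, ∀ t ∈ Set.Icc (0 : ℝ) T, s ≤ t →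
        (ℙ[fun ω => v t (X t ω) - I t ω|ℱ s]) ≤ᵐ[ℙ]
          fun ω => v s (X s ω) - I s ω) :=
  stmt18_general ℙ ℱ hT.le hX hXc hvconc hvmono hvx hvxc
    (fun t _ => integrable_comp_of_hasDerivAt_of_abs_le (hvx t) (hvxb t) (hX.integrable t))
    hIadapted (fun t _ => hIint t) hI
end
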